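/- Let Δ be a finite graph, let Δ' be a subdivision of Δ, and let X be a length space. Then X has Δ as an asymptotic minor if and only if X has Δ' as an asymptotic minor. -/

import Mathlib

/-!
Having `Δ` as an asymptotic minor is compared with having its subdivision `Δ'` as one, separately
for each degree of fatness `K`.

*From `Δ'` to `Δ`* no geometry is needed. Contracting the interior vertices of each subdivided edge
into the head of that edge turns `Δ'` into `Δ`, and a `K`-fat `Δ'`-minor becomes a `K`-fat
`Δ`-minor if the branch set of `v` is taken to be the union of all branch sets and branch paths
contracted to `v` (`HasMetricFatMinor.of_contraction`).

*From `Δ` to `Δ'`* the difficulty is that the branch paths of a fat minor may return arbitrarily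
close to themselves, so they cannot simply be cut into pieces. Fix `R` much larger than `K` and start
from a `(K + 2R + 4)`-fat `Δ`-minor. For an edge `e` oriented from `u` to `v`, let `T` be the final
segment of its branch path after the last time it is at distance at most `R` from the closed branch
set of `u`. The first point of `T` is at distance `R` from that branch set, and since `X` is a
length space the two are joined by an arc `γ` of length about `R` (`exists_arc_to_tail`). As `R` is
also the distance between the sets it joins, `γ` is geodesic up to an additive error of `1`, and so
parameter values that differ a lot give points far apart, and a point of `γ` is close to one of the
two sets only if it is close to the corresponding end of `γ`. Absorbing `T` into the branch set of `v`
for every edge `e` leaves the configuration recorded in `FatSkeleton`; all other distances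
remain at least `K` because every point of `γ` is within `R + 1` of both of its endpoints. If `e` is
subdivided into `k` edges, then `γ` is divided into `2k - 1` equal pieces, which serve alternately as
branch paths and as branch sets of the `k - 1` new vertices; non-consecutive pieces are `K`-far apart
as soon as `R ≥ (K + 1) (2k - 1)` (`FatSkeleton.hasMetricFatMinor`). A finite graph has finitely many
edges, so one `R` serves all of them.

Branch paths have to be injective. A path of nearly minimal length is made so by
`exists_lipschitz_reparam` and `exists_injOn_lipschitz`: it has a Lipschitz parametrisation, and among
the Lipschitz curves in its compact image with the same endpoints, one with the least Lipschitz
constant is injective.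
-/

/-- A metric space is a length space if any two points are joined by paths of length
arbitrarily close to their distance. -/
def IsLengthSpace (X : Type*) [MetricSpace X] : Prop :=
  ∀ x y : X, ∀ ε : ℝ, 0 < ε → ∃ p : Path x y,
    eVariationOn (fun t => p t) Set.univ ≤ ENNReal.ofReal (dist x y + ε)
/-- `S` is an arc from `a` to `b`: the image of an injective path. -/
def IsArcIn {X : Type*} [TopologicalSpace X] (S : Set X) (a b : X) : Prop :=
  ∃ p : Path a b, Function.Injective (fun t => p t) ∧ Set.range (fun t => p t) = S

/-- A metric space `X` has the graph `H` as a `K`-fat minor: there are pairwise disjoint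
connected branch sets `B v` and pairwise disjoint branch arcs `P e`, each branch arc meeting
the union of the branch sets exactly at its two endpoints (lying in the branch sets of the
endvertices of the corresponding edge), such that any two of these sets are at distance
at least `K` unless they are equal or an incident branch set/branch arc pair. -/
def HasMetricFatMinor {W : Type*} (H : SimpleGraph W) (X : Type*) [MetricSpace X]
    (K : ℝ) : Prop :=
  ∃ (B : W → Set X) (P : Sym2 W → Set X),
    (∀ v, IsConnected (B v)) ∧
    (∀ v v', v ≠ v' → Disjoint (B v) (B v')) ∧
    (∀ u w, H.Adj u w → ∃ a ∈ B u, ∃ b ∈ B w,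
        IsArcIn (P s(u, w)) a b ∧ P s(u, w) ∩ (⋃ v, B v) = {a, b}) ∧
    (∀ e ∈ H.edgeSet, ∀ e' ∈ H.edgeSet, e ≠ e' → Disjoint (P e) (P e')) ∧
    (∀ v v', v ≠ v' → ∀ x ∈ B v, ∀ y ∈ B v', K ≤ dist x y) ∧
    (∀ e ∈ H.edgeSet, ∀ e' ∈ H.edgeSet, e ≠ e' → ∀ x ∈ P e, ∀ y ∈ P e', K ≤ dist x y) ∧
    (∀ u w, H.Adj u w → ∀ v, v ≠ u → v ≠ w → ∀ x ∈ P s(u, w), ∀ y ∈ B v, K ≤ dist x y)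

/-- `X` has `H` as an asymptotic minor if it has a `K`-fat `H`-minor for every `K > 0`. -/
def HasAsymptoticMinor {W : Type*} (H : SimpleGraph W) (X : Type*) [MetricSpace X] : Prop :=
  ∀ K : ℝ, 0 < K → HasMetricFatMinor H X K
/-- `Δ'` is a subdivision of `Δ`: `Δ'` is obtained from `Δ` by replacing the edges of `Δ`
by internally disjoint paths between the (injectively embedded) branch vertices, these
paths avoiding branch vertices internally and covering all vertices and edges of `Δ'`. -/
def IsSubdivisionOf {W' W : Type*} (Δ' : SimpleGraph W') (Δ : SimpleGraph W) : Prop :=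
  ∃ (φ : W → W') (P : ∀ u v : W, Δ.Adj u v → Δ'.Walk (φ u) (φ v)),
    Function.Injective φ ∧
    (∀ u v (h : Δ.Adj u v), (P u v h).IsPath) ∧
    (∀ u v (h : Δ.Adj u v), (P v u h.symm).support = (P u v h).support.reverse) ∧
    (∀ u v (h : Δ.Adj u v), ∀ w, w ∈ (P u v h).support → w ∈ Set.range φ →
      w = φ u ∨ w = φ v) ∧
    (∀ u v u' v' (h : Δ.Adj u v) (h' : Δ.Adj u' v'), s(u, v) ≠ s(u', v') →
      ∀ w, w ∈ (P u v h).support → w ∈ (P u' v' h').support →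
        ((w = φ u ∨ w = φ v) ∧ (w = φ u' ∨ w = φ v'))) ∧
    (∀ w : W', w ∈ Set.range φ ∨ ∃ u, ∃ v, ∃ h : Δ.Adj u v, w ∈ (P u v h).support) ∧
    (∀ e ∈ Δ'.edgeSet, ∃ u, ∃ v, ∃ h : Δ.Adj u v, e ∈ (P u v h).edges)

section

open Set

/-! ### Short arcs in length spaces -/

lemma le_of_le_on_Ioo {F : ℝ → ℝ} (hF : Continuous F) {a b c : ℝ} (hab : a < b)
    (h : ∀ t ∈ Ioo a b, F t ≤ c) : ∀ t ∈ Icc a b, F t ≤ c := by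
  have hcl : IsClosed {t | F t ≤ c} := isClosed_le hF continuous_const
  have := hcl.closure_subset_iff.2 (show Ioo a b ⊆ {t | F t ≤ c} from h)
  rw [closure_Ioo hab.ne] at this
  exact this

/-- A path of finite variation can be traversed in a Lipschitz way.  The new parametrisation is a
generalised inverse of the arc-length function, so no continuity of the latter is needed. -/
lemma exists_lipschitz_reparam {X : Type*} [MetricSpace X] {a q : X} (p : Path a q) {L : ℝ}
    (hL : 0 < L) (hp : eVariationOn (fun t => p t) univ ≤ ENNReal.ofReal L) :
    ∃ g : ℝ → X, (∀ t, g t ∈ range p) ∧ g 0 = a ∧ g 1 = q ∧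
      ∀ s ∈ Icc (0 : ℝ) 1, ∀ t ∈ Icc (0 : ℝ) 1, dist (g s) (g t) ≤ L * |s - t| := by
  set F : ℝ → X := fun t => p.extend t with hFdef
  have hFc : Continuous F := p.extend.continuous
  have hF0 : F 0 = a := p.extend_zero
  have hF1 : F 1 = q := p.extend_one
  have hFvar : eVariationOn F univ ≤ ENNReal.ofReal L := by
    refine le_trans ?_ hp
    exact eVariationOn.comp_le_of_monotoneOn (fun t => p t) (projIcc (0 : ℝ) 1 zero_le_one)
      ((monotone_projIcc _).monotoneOn _) (mapsTo_univ _ _)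
  set ℓ : ℝ → ℝ := fun t => (eVariationOn F (Iic t)).toReal with hℓ
  have hfin : ∀ t, eVariationOn F (Iic t) ≠ ⊤ := fun t =>
    ne_top_of_le_ne_top ENNReal.ofReal_ne_top ((eVariationOn.mono F (subset_univ _)).trans hFvar)
  have hℓ0 : ∀ t, 0 ≤ ℓ t := fun t => ENNReal.toReal_nonneg
  have hℓL : ∀ t, ℓ t ≤ L := fun t =>
    ENNReal.toReal_le_of_le_ofReal hL.le ((eVariationOn.mono F (subset_univ _)).trans hFvar)
  have hℓd : ∀ s t, s ≤ t → dist (F s) (F t) ≤ ℓ t - ℓ s := by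
    intro s t hst
    have h1 : eVariationOn F (Iic s) + edist (F s) (F t) ≤ eVariationOn F (Iic t) := by
      rw [← eVariationOn.pair F s t]
      refine (eVariationOn.add_le_union F ?_).trans (eVariationOn.mono F ?_)
      · rintro x hx y (rfl | rfl)
        · exact hx
        · exact le_trans hx hst
      · rintro x (hx | rfl | rfl)
        · exact le_trans hx hst
        · exact hst
        · exact self_mem_Iic
    have h2 := ENNReal.toReal_mono (hfin t) h1
    rw [ENNReal.toReal_add (hfin s) (edist_ne_top _ _), ← dist_edist] at h2
    simp only [hℓ]; linarith
  have hℓm : Monotone ℓ := fun s t hst => by linarith [hℓd s t hst, dist_nonneg (x := F s) (y := F t)]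
  have hτ : ∀ s : ℝ, ∃ τ ∈ Icc (0 : ℝ) 1, (∀ t ∈ Icc (0 : ℝ) 1, t < τ → ℓ t ≤ s * L) ∧
      (∀ t ∈ Icc (0 : ℝ) 1, τ < t → s * L < ℓ t) := by
    intro s
    set S : Set ℝ := insert 0 {t | t ∈ Icc (0 : ℝ) 1 ∧ ℓ t ≤ s * L}
    have hbdd : BddAbove S := ⟨1, by rintro x (rfl | hx); exacts [zero_le_one, hx.1.2]⟩
    have h0 : (0 : ℝ) ∈ S := mem_insert _ _
    refine ⟨sSup S, ⟨le_csSup hbdd h0, csSup_le ⟨0, h0⟩ ?_⟩, ?_, ?_⟩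
    · rintro x (rfl | hx); exacts [zero_le_one, hx.1.2]
    · intro t ht hlt
      obtain ⟨t', ht', htt'⟩ := exists_lt_of_lt_csSup ⟨0, h0⟩ hlt
      rcases ht' with rfl | ht'
      · exact absurd ht.1 (not_le.2 htt')
      · exact (hℓm htt'.le).trans ht'.2
    · intro t ht hlt
      by_contra hcon
      exact absurd (le_csSup hbdd (Or.inr ⟨ht, not_lt.1 hcon⟩ : t ∈ S)) (not_le.2 hlt)
  choose τ hτI hτl hτu using hτ
  refine ⟨fun s => F (τ s), fun t => ⟨projIcc (0 : ℝ) 1 zero_le_one (τ t), rfl⟩, ?_, ?_, ?_⟩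
  · have h : dist (F 0) (F (τ 0)) ≤ 0 := by
      rcases (hτI 0).1.eq_or_lt with h | h
      · rw [← h, dist_self]
      · refine le_of_le_on_Ioo (F := fun t => dist (F 0) (F t)) (by fun_prop) h ?_ _
          (right_mem_Icc.2 h.le)
        intro t ht
        have h1 := hℓd 0 t ht.1.le
        have h2 := hτl 0 t ⟨ht.1.le, ht.2.le.trans (hτI 0).2⟩ ht.2
        have := hℓ0 0
        linarith
    rw [← hF0]
    exact (dist_le_zero.1 h).symm
  · have h : dist (F (τ 1)) (F 1) ≤ 0 := by
      rcases (hτI 1).2.eq_or_lt with h | h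
      · rw [h, dist_self]
      · refine le_of_le_on_Ioo (F := fun t => dist (F t) (F 1)) (by fun_prop) h ?_ _
          (left_mem_Icc.2 h.le)
        intro t ht
        have h1 := hℓd t 1 ht.2.le
        have h2 := hτu 1 t ⟨(hτI 1).1.trans ht.1.le, ht.2.le⟩ ht.1
        have := hℓL 1
        linarith
    rw [← hF1]
    exact dist_le_zero.1 h
  · have key : ∀ s t, s < t → dist (F (τ s)) (F (τ t)) ≤ L * (t - s) := by
      intro s t hst
      have hsL : s * L < t * L := mul_lt_mul_of_pos_right hst hL
      rcases lt_trichotomy (τ s) (τ t) with h | h | h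
      · refine le_of_le_on_Ioo (F := fun y => dist (F (τ s)) (F y)) (by fun_prop) h ?_ _
          (right_mem_Icc.2 h.le)
        intro y hy
        refine le_of_le_on_Ioo (F := fun x => dist (F x) (F y)) (by fun_prop) h ?_ _
          (left_mem_Icc.2 h.le)
        intro x hx
        have hIx : x ∈ Icc (0 : ℝ) 1 := ⟨(hτI s).1.trans hx.1.le, hx.2.le.trans (hτI t).2⟩
        have hIy : y ∈ Icc (0 : ℝ) 1 := ⟨(hτI s).1.trans hy.1.le, hy.2.le.trans (hτI t).2⟩
        have h1 := hτu s x hIx hx.1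
        have h2 := hτu s y hIy hy.1
        have h3 := hτl t x hIx hx.2
        have h4 := hτl t y hIy hy.2
        rcases le_total x y with hxy | hxy
        · have := hℓd x y hxy
          nlinarith
        · have := hℓd y x hxy
          rw [dist_comm]
          nlinarith
      · rw [h, dist_self]
        exact mul_nonneg hL.le (by linarith)
      · obtain ⟨x, hx1, hx2⟩ := exists_between h
        have hIx : x ∈ Icc (0 : ℝ) 1 := ⟨(hτI t).1.trans hx1.le, hx2.le.trans (hτI s).2⟩
        have h1 := hτl s x hIx hx2
        have h2 := hτu t x hIx hx1
        linarith
    intro s _ t _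
    rcases lt_trichotomy s t with h | h | h
    · rw [abs_sub_comm, abs_of_pos (sub_pos.2 h)]; exact key s t h
    · simp [h]
    · rw [dist_comm, abs_of_pos (sub_pos.2 h)]; exact key t s h

/-- A Lipschitz curve inside a compact set can be replaced by an injective one with the same
endpoints and no worse Lipschitz constant: a curve with the least possible Lipschitz constant
exists by compactness, and is injective because cutting out a loop would lower the constant. -/
lemma exists_injOn_lipschitz {X : Type*} [MetricSpace X] {C : Set X} (hC : IsCompact C) {a q : X}
    (haq : a ≠ q) {L : ℝ} (hL : 0 < L) {g : ℝ → X} (hgC : ∀ t, g t ∈ C) (hg0 : g 0 = a)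
    (hg1 : g 1 = q)
    (hg : ∀ s ∈ Icc (0 : ℝ) 1, ∀ t ∈ Icc (0 : ℝ) 1, dist (g s) (g t) ≤ L * |s - t|) :
    ∃ γ : ℝ → X, γ 0 = a ∧ γ 1 = q ∧ InjOn γ (Icc 0 1) ∧
      ∀ s ∈ Icc (0 : ℝ) 1, ∀ t ∈ Icc (0 : ℝ) 1, dist (γ s) (γ t) ≤ L * |s - t| := by
  set S : Set ((ℝ → X) × ℝ) := {z | z.1 0 = a ∧ z.1 1 = q ∧
    ∀ s ∈ Icc (0 : ℝ) 1, ∀ t ∈ Icc (0 : ℝ) 1, dist (z.1 s) (z.1 t) ≤ z.2 * |s - t|} with hS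
  have hSc : IsClosed S := by
    have hev : ∀ t : ℝ, Continuous fun z : (ℝ → X) × ℝ => z.1 t := fun t =>
      (continuous_apply t).comp continuous_fst
    simp only [hS, ofPred_and, ofPred_forall]
    refine (isClosed_eq (hev 0) continuous_const).inter
      ((isClosed_eq (hev 1) continuous_const).inter ?_)
    refine isClosed_iInter fun s => isClosed_iInter fun _ => isClosed_iInter fun t =>
      isClosed_iInter fun _ => ?_
    exact isClosed_le ((hev s).dist (hev t)) (continuous_snd.mul continuous_const)
  have hcomp : IsCompact (((univ : Set ℝ).pi fun _ => C) ×ˢ Icc 0 L ∩ S) :=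
    ((isCompact_univ_pi fun _ => hC).prod isCompact_Icc).inter_right hSc
  obtain ⟨⟨f, M⟩, ⟨⟨hfC, hM⟩, hf0, hf1, hf⟩, hmin⟩ := hcomp.exists_isMinOn
    ⟨(g, L), ⟨⟨fun t _ => hgC t, ⟨hL.le, le_rfl⟩⟩, hg0, hg1, hg⟩⟩ continuous_snd.continuousOn
  simp only at hfC hM hf0 hf1 hf
  have h01 : (0 : ℝ) ∈ Icc (0 : ℝ) 1 := by simp
  have h11 : (1 : ℝ) ∈ Icc (0 : ℝ) 1 := by simp
  have hMpos : 0 < M := by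
    have h := hf 0 h01 1 h11
    rw [hf0, hf1] at h
    have := dist_pos.2 haq
    norm_num at h
    linarith
  refine ⟨f, hf0, hf1, ?_, fun s hs t ht => (hf s hs t ht).trans
    (mul_le_mul_of_nonneg_right hM.2 (abs_nonneg _))⟩
  have key : ∀ s ∈ Icc (0 : ℝ) 1, ∀ t ∈ Icc (0 : ℝ) 1, s < t → f s ≠ f t := by
    intro s hs t ht hst heq
    set c : ℝ := 1 - (t - s) with hc
    have hc0 : 0 ≤ c := by linarith [hs.1, ht.2]
    have hc1 : c < 1 := by linarith
    set h : ℝ → X := fun x => if c * x ≤ s then f (c * x) else f (c * x + (t - s)) with hh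
    have hlip : ∀ x ∈ Icc (0 : ℝ) 1, ∀ y ∈ Icc (0 : ℝ) 1, x ≤ y →
        dist (h x) (h y) ≤ M * c * (y - x) := by
      intro x hx y hy hxy
      have hcxy : c * x ≤ c * y := mul_le_mul_of_nonneg_left hxy hc0
      have hcx : 0 ≤ c * x := mul_nonneg hc0 hx.1
      have hcy : c * y ≤ c := mul_le_of_le_one_right hc0 hy.2
      simp only [hh]
      split_ifs with h1 h2 h2
      · refine (hf _ ⟨hcx, by linarith⟩ _ ⟨by linarith, by linarith⟩).trans (le_of_eq ?_)
        rw [abs_sub_comm, abs_of_nonneg (by linarith)]; ring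
      · push Not at h2
        have e1 := hf (c * x) ⟨hcx, by linarith⟩ s hs
        have e2 := hf t ht (c * y + (t - s)) ⟨by linarith [hs.1], by linarith⟩
        rw [abs_sub_comm, abs_of_nonneg (by linarith)] at e1
        rw [abs_sub_comm, abs_of_nonneg (by linarith)] at e2
        have e3 := dist_triangle (f (c * x)) (f s) (f (c * y + (t - s)))
        rw [← heq] at e2
        nlinarith
      · exact absurd (hcxy.trans h2) h1
      · push Not at h1 h2
        refine (hf _ ⟨by linarith [hs.1], by linarith⟩ _ ⟨by linarith [hs.1], by linarith⟩).trans
          (le_of_eq ?_)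
        rw [abs_sub_comm, abs_of_nonneg (by linarith)]; ring
    have hmem : (h, M * c) ∈ ((univ : Set ℝ).pi fun _ => C) ×ˢ Icc 0 L ∩ S := by
      refine ⟨⟨fun x _ => ?_, mul_nonneg hMpos.le hc0, ?_⟩, ?_, ?_, ?_⟩
      · simp only [hh]
        split_ifs
        exacts [hfC _ (mem_univ _), hfC _ (mem_univ _)]
      · have := hM.2
        simp only
        nlinarith
      · simp only [hh, mul_zero, hs.1, if_true, hf0]
      · simp only [hh, mul_one]
        split_ifs with h1
        · have ht1 : t = 1 := le_antisymm ht.2 (by linarith)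
          have hcs : c = s := by rw [hc, ht1]; ring
          rw [hcs, heq, ht1, hf1]
        · rw [show c + (t - s) = 1 by rw [hc]; ring, hf1]
      · intro x hx y hy
        simp only
        rcases le_total x y with hxy | hxy
        · rw [abs_sub_comm, abs_of_nonneg (sub_nonneg.2 hxy)]; exact hlip x hx y hy hxy
        · rw [dist_comm, abs_of_nonneg (sub_nonneg.2 hxy)]; exact hlip y hy x hx hxy
    have h1 : M ≤ M * c := hmin hmem
    nlinarith
  intro s hs t ht hst
  by_contra hne
  rcases lt_or_gt_of_ne hne with h | h
  · exact key s hs t ht h hst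
  · exact key t ht s hs h hst.symm

/-- A curve from a closed set `A` to a disjoint closed set `T` can be trimmed so that it meets `A`
only at its start and `T` only at its end. -/
lemma exists_trim {X : Type*} [MetricSpace X] {A T : Set X} (hA : IsClosed A) (hT : IsClosed T)
    (hAT : Disjoint A T) {L : ℝ} (hL : 0 < L) {g : ℝ → X} (hg0 : g 0 ∈ A) (hg1 : g 1 ∈ T)
    (hinj : InjOn g (Icc 0 1))
    (hg : ∀ s ∈ Icc (0 : ℝ) 1, ∀ t ∈ Icc (0 : ℝ) 1, dist (g s) (g t) ≤ L * |s - t|) :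
    ∃ γ : ℝ → X, γ 0 ∈ A ∧ γ 1 ∈ T ∧ InjOn γ (Icc 0 1) ∧
      (∀ s ∈ Icc (0 : ℝ) 1, ∀ t ∈ Icc (0 : ℝ) 1, dist (γ s) (γ t) ≤ L * |s - t|) ∧
      (∀ t ∈ Icc (0 : ℝ) 1, γ t ∈ A → t = 0) ∧ (∀ t ∈ Icc (0 : ℝ) 1, γ t ∈ T → t = 1) := by
  have hgc : ContinuousOn g (Icc 0 1) := by
    have : LipschitzOnWith (Real.toNNReal L) g (Icc 0 1) :=
      LipschitzOnWith.of_dist_le_mul fun s hs t ht => by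
        rw [Real.coe_toNNReal _ hL.le, Real.dist_eq]; exact hg s hs t ht
    exact this.continuousOn
  have hcA : IsCompact (Icc (0 : ℝ) 1 ∩ g ⁻¹' A) :=
    isCompact_Icc.of_isClosed_subset (hgc.preimage_isClosed_of_isClosed isClosed_Icc hA)
      inter_subset_left
  obtain ⟨α, ⟨hαI, hαA⟩, hα⟩ := hcA.exists_isGreatest ⟨0, by simp, hg0⟩
  have hcT : IsCompact (Icc α 1 ∩ g ⁻¹' T) :=
    isCompact_Icc.of_isClosed_subset ((hgc.mono (Icc_subset_Icc_left hαI.1)).preimage_isClosed_of_isClosed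
      isClosed_Icc hT) inter_subset_left
  obtain ⟨β, ⟨hβI, hβT⟩, hβ⟩ := hcT.exists_isLeast ⟨1, by simp [hαI.2], hg1⟩
  have hne : α ≠ β := by
    rintro rfl
    exact disjoint_left.1 hAT hαA hβT
  have hαβ : α < β := lt_of_le_of_ne hβI.1 hne
  have hmem : ∀ t ∈ Icc (0 : ℝ) 1, α + t * (β - α) ∈ Icc α β := fun t ht =>
    ⟨by nlinarith [ht.1], by nlinarith [ht.2]⟩
  have hmem' : ∀ t ∈ Icc (0 : ℝ) 1, α + t * (β - α) ∈ Icc (0 : ℝ) 1 := fun t ht =>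
    ⟨hαI.1.trans (hmem t ht).1, (hmem t ht).2.trans hβI.2⟩
  refine ⟨fun t => g (α + t * (β - α)), by simpa using hαA, by simpa using hβT, ?_, ?_, ?_, ?_⟩
  · intro s hs t ht hst
    have := hinj (hmem' s hs) (hmem' t ht) hst
    have h2 : s * (β - α) = t * (β - α) := by linarith
    exact mul_right_cancel₀ (sub_ne_zero.2 hαβ.ne') h2
  · intro s hs t ht
    refine (hg _ (hmem' s hs) _ (hmem' t ht)).trans ?_
    rw [show α + s * (β - α) - (α + t * (β - α)) = (s - t) * (β - α) by ring, abs_mul,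
      abs_of_pos (sub_pos.2 hαβ)]
    refine mul_le_mul_of_nonneg_left ?_ hL.le
    exact mul_le_of_le_one_right (abs_nonneg _) (by linarith [hαI.1, hβI.2])
  · intro t ht htA
    have h1 : α + t * (β - α) ≤ α := hα ⟨hmem' t ht, htA⟩
    have h2 := ht.1
    by_contra h3
    have h4 : 0 < t := lt_of_le_of_ne h2 (Ne.symm h3)
    nlinarith [mul_pos h4 (sub_pos.2 hαβ)]
  · intro t ht htT
    have h1 : β ≤ α + t * (β - α) := hβ ⟨⟨(hmem t ht).1, (hmem' t ht).2⟩, htT⟩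
    nlinarith [ht.2, ht.1, mul_pos (sub_pos.2 hαβ) (sub_pos.2 hαβ)]

/-- Given a path from a closed set `A` to a point `b` far away from `A`, its final segment `T` from
the last time it is at distance at most `R` from `A` stays at distance at least `R` from `A`,
and there is an almost geodesic arc from `A` to `T`, of length about `R`. -/
lemma exists_arc_to_tail {X : Type*} [MetricSpace X] (hX : IsLengthSpace X) {A : Set X}
    (hA : IsClosed A) {R : ℝ} (hR : 0 < R) {a b : X} (ha : a ∈ A) (p : Path a b)
    (hb : R < Metric.infDist b A) :
    ∃ (T : Set X) (γ : ℝ → X), IsConnected T ∧ b ∈ T ∧ T ⊆ range (fun t => p t) ∧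
      (∀ z ∈ T, ∀ y ∈ A, R ≤ dist z y) ∧ γ 0 ∈ A ∧ γ 1 ∈ T ∧ InjOn γ (Icc 0 1) ∧
      (∀ s ∈ Icc (0 : ℝ) 1, ∀ t ∈ Icc (0 : ℝ) 1, dist (γ s) (γ t) ≤ (R + 1) * |s - t|) ∧
      (∀ t ∈ Icc (0 : ℝ) 1, γ t ∈ A → t = 0) ∧ (∀ t ∈ Icc (0 : ℝ) 1, γ t ∈ T → t = 1) := by
  set F : ℝ → X := fun t => p.extend t with hF
  have hFc : Continuous F := p.extend.continuous
  have hF0 : F 0 = a := p.extend_zero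
  have hF1 : F 1 = b := p.extend_one
  set f : ℝ → ℝ := fun t => Metric.infDist (F t) A with hf
  have hfc : Continuous f := (Metric.continuous_infDist_pt A).comp hFc
  have hf0 : f 0 = 0 := by simp only [hf, hF0]; exact Metric.infDist_zero_of_mem ha
  have hcomp : IsCompact (Icc (0 : ℝ) 1 ∩ f ⁻¹' Iic R) :=
    isCompact_Icc.inter_right (isClosed_Iic.preimage hfc)
  obtain ⟨σ, ⟨hσI, hσR⟩, hσ⟩ := hcomp.exists_isGreatest
    ⟨0, by simp, by simp only [mem_preimage, hf0, mem_Iic]; exact hR.le⟩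
  have hσ1 : σ < 1 := by
    refine lt_of_le_of_ne hσI.2 ?_
    rintro rfl
    have h : f 1 ≤ R := hσR
    simp only [hf, hF1] at h
    linarith
  -- strictly after `σ` the level exceeds `R`, hence it is at least `R` at `σ` by continuity
  have hlev : ∀ t ∈ Icc σ 1, R ≤ f t := by
    intro t ht
    have := le_of_le_on_Ioo (F := fun t => -f t) (c := -R) hfc.neg hσ1 ?_ t ht
    · linarith
    · intro u hu
      by_contra hcon
      have h1 : f u ≤ R := by linarith
      exact absurd (hσ ⟨⟨hσI.1.trans hu.1.le, hu.2.le⟩, h1⟩) (not_le.2 hu.1)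
  set T : Set X := F '' Icc σ 1 with hT
  have hTA : ∀ z ∈ T, ∀ y ∈ A, R ≤ dist z y := by
    rintro _ ⟨t, ht, rfl⟩ y hy
    exact (hlev t ht).trans (Metric.infDist_le_dist_of_mem hy)
  have hTc : IsCompact T := isCompact_Icc.image hFc
  have hσT : F σ ∈ T := mem_image_of_mem F (left_mem_Icc.2 hσ1.le)
  obtain ⟨y, hyA, hy⟩ := (Metric.infDist_lt_iff (r := R + 1 / 2) ⟨a, ha⟩).1
    (lt_of_le_of_lt (show f σ ≤ R from hσR) (by linarith))
  obtain ⟨c, hc⟩ := hX y (F σ) (1 / 2) (by norm_num)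
  have hyne : y ≠ F σ := by
    rintro rfl
    have := hTA _ hσT _ hyA
    rw [dist_self] at this
    linarith
  obtain ⟨g, hgC, hg0, hg1, hg⟩ := exists_lipschitz_reparam c (L := R + 1) (by linarith)
    (hc.trans (ENNReal.ofReal_le_ofReal (by rw [dist_comm]; linarith)))
  obtain ⟨g', hg'0, hg'1, hg'i, hg'⟩ := exists_injOn_lipschitz (isCompact_range c.continuous) hyne
    (by linarith) hgC hg0 hg1 hg
  have hdisj : Disjoint A T := by
    rw [disjoint_left]
    intro x hxA hxT
    have := hTA x hxT x hxA
    rw [dist_self] at this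
    linarith
  obtain ⟨γ, h0, h1, hi, hl, hγA, hγT⟩ := exists_trim hA hTc.isClosed hdisj (L := R + 1)
    (by linarith) (by rw [hg'0]; exact hyA) (by rw [hg'1]; exact hσT) hg'i hg'
  refine ⟨T, γ, (isConnected_Icc hσ1.le).image F hFc.continuousOn,
    ⟨1, right_mem_Icc.2 hσ1.le, hF1⟩, ?_, hTA, h0, h1, hi, hl, hγA, hγT⟩
  rintro _ ⟨t, _, rfl⟩
  exact ⟨projIcc (0 : ℝ) 1 zero_le_one t, rfl⟩

/-! ### The skeleton of a fat minor -/

/-- The geometric configuration from which fat minors of all subdivisions are read off, for a graph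
with vertex set `W` and edges `E`, each edge `e` oriented from `tl e` to `hd e`: connected sets
`D v`, pairwise `K`-separated, and for each edge `e` an arc `γ e`, parametrised by `[0, 1]`, which
is almost geodesic of length about `R` and which leaves `D (tl e)` and approaches `D (hd e)` at
almost full speed, while `K`-far from everything else. -/
structure FatSkeleton {E W : Type*} (tl hd : E → W) (X : Type*) [MetricSpace X] (K R : ℝ) where
  D : W → Set X
  γ : E → ℝ → X
  conn : ∀ v, IsConnected (D v)
  sep : ∀ v v', v ≠ v' → ∀ x ∈ D v, ∀ y ∈ D v', K ≤ dist x y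
  inj : ∀ e, InjOn (γ e) (Icc 0 1)
  cont : ∀ e, ContinuousOn (γ e) (Icc 0 1)
  geo : ∀ e, ∀ s ∈ Icc (0 : ℝ) 1, ∀ t ∈ Icc (0 : ℝ) 1, R * |s - t| - 1 ≤ dist (γ e s) (γ e t)
  sepγ : ∀ e e', e ≠ e' → ∀ s ∈ Icc (0 : ℝ) 1, ∀ t ∈ Icc (0 : ℝ) 1, K ≤ dist (γ e s) (γ e' t)
  tl_far : ∀ e, ∀ t ∈ Icc (0 : ℝ) 1, ∀ z ∈ D (tl e), R * t - 1 ≤ dist (γ e t) z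
  hd_far : ∀ e, ∀ t ∈ Icc (0 : ℝ) 1, ∀ z ∈ D (hd e), R * (1 - t) - 1 ≤ dist (γ e t) z
  far : ∀ e v, v ≠ tl e → v ≠ hd e → ∀ t ∈ Icc (0 : ℝ) 1, ∀ z ∈ D v, K ≤ dist (γ e t) z
  tl_mem : ∀ e, γ e 0 ∈ D (tl e)
  hd_mem : ∀ e, γ e 1 ∈ D (hd e)
  tl_only : ∀ e, ∀ t ∈ Icc (0 : ℝ) 1, γ e t ∈ D (tl e) → t = 0
  hd_only : ∀ e, ∀ t ∈ Icc (0 : ℝ) 1, γ e t ∈ D (hd e) → t = 1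

lemma le_dist_of_mem_closure {X : Type*} [MetricSpace X] {S T : Set X} {c : ℝ}
    (h : ∀ x ∈ S, ∀ y ∈ T, c ≤ dist x y) : ∀ x ∈ closure S, ∀ y ∈ closure T, c ≤ dist x y := by
  have h1 : ∀ x ∈ S, ∀ y ∈ closure T, c ≤ dist x y := fun x hx y hy =>
    closure_minimal (show T ⊆ {y | c ≤ dist x y} from h x hx)
      (isClosed_le continuous_const (by fun_prop)) hy
  intro x hx y hy
  exact closure_minimal (show S ⊆ {x | c ≤ dist x y} from fun x hx => h1 x hx y hy)
      (isClosed_le continuous_const (by fun_prop)) hx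

/-- A sufficiently fat minor yields a skeleton.  The set `D v` consists of the closed branch set of
`v` and the final segments of the branch paths of the edges oriented towards `v`. -/
lemma exists_fatSkeleton {X : Type*} [MetricSpace X] (hX : IsLengthSpace X) {W : Type*}
    {Δ : SimpleGraph W} (tl hd : Δ.edgeSet → W) (hmk : ∀ e, s(tl e, hd e) = e.1) {K R : ℝ}
    (hK : 0 < K) (hKR : K ≤ R) (h : HasMetricFatMinor Δ X (K + 2 * R + 4)) :
    Nonempty (FatSkeleton tl hd X K R) := by
  obtain ⟨B, P, hconn, -, hP, -, hBB, hPP, hPB⟩ := h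
  have hR : 0 < R := hK.trans_le hKR
  have hadj : ∀ e, Δ.Adj (tl e) (hd e) := fun e => by
    rw [← SimpleGraph.mem_edgeSet, hmk]; exact e.2
  have hAA : ∀ v v', v ≠ v' → ∀ x ∈ closure (B v), ∀ y ∈ closure (B v'),
      K + 2 * R + 4 ≤ dist x y := fun v v' hv => le_dist_of_mem_closure (hBB v v' hv)
  have hPA : ∀ e v, v ≠ tl e → v ≠ hd e → ∀ x ∈ P e.1, ∀ y ∈ closure (B v),
      K + 2 * R + 4 ≤ dist x y := by
    intro e v h1 h2 x hx y hy
    rw [← hmk] at hx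
    exact le_dist_of_mem_closure (hPB _ _ (hadj e) v h1 h2) x (subset_closure hx) y hy
  have hPP' : ∀ e e' : Δ.edgeSet, e ≠ e' → ∀ x ∈ P e.1, ∀ y ∈ P e'.1,
      K + 2 * R + 4 ≤ dist x y := fun e e' hee =>
    hPP _ e.2 _ e'.2 fun h => hee (Subtype.ext h)
  have hex : ∀ e, ∃ (T : Set X) (γ : ℝ → X), IsConnected T ∧ (T ∩ closure (B (hd e))).Nonempty ∧
      T ⊆ P e.1 ∧ (∀ z ∈ T, ∀ y ∈ closure (B (tl e)), R ≤ dist z y) ∧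
      γ 0 ∈ closure (B (tl e)) ∧ γ 1 ∈ T ∧ InjOn γ (Icc 0 1) ∧
      (∀ s ∈ Icc (0 : ℝ) 1, ∀ t ∈ Icc (0 : ℝ) 1, dist (γ s) (γ t) ≤ (R + 1) * |s - t|) ∧
      (∀ t ∈ Icc (0 : ℝ) 1, γ t ∈ closure (B (tl e)) → t = 0) ∧
      (∀ t ∈ Icc (0 : ℝ) 1, γ t ∈ T → t = 1) := by
    intro e
    obtain ⟨a, ha, b, hb, ⟨p, -, hp⟩, -⟩ := hP _ _ (hadj e)
    have hbfar : R < Metric.infDist b (closure (B (tl e))) := by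
      refine lt_of_lt_of_le (show R < K + 2 * R + 4 by linarith)
        ((Metric.le_infDist ⟨a, subset_closure ha⟩).2 ?_)
      intro y hy
      exact hAA _ _ (hadj e).ne' b (subset_closure hb) y hy
    obtain ⟨T, γ, h1, h2, h3, h4⟩ :=
      exists_arc_to_tail hX isClosed_closure hR (subset_closure ha) p hbfar
    rw [hp, hmk] at h3
    exact ⟨T, γ, h1, ⟨b, h2, subset_closure hb⟩, h3, h4⟩
  choose T γ hTc hTB hTP hTA h0 h1 hinj hlip hA0 hT1 using hex
  have I0 : (0 : ℝ) ∈ Icc (0 : ℝ) 1 := by simp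
  have I1 : (1 : ℝ) ∈ Icc (0 : ℝ) 1 := by simp
  have hd0 : ∀ e, ∀ t ∈ Icc (0 : ℝ) 1, dist (γ e t) (γ e 0) ≤ (R + 1) * t := fun e t ht => by
    simpa [abs_of_nonneg ht.1] using hlip e t ht 0 I0
  have hd1 : ∀ e, ∀ t ∈ Icc (0 : ℝ) 1, dist (γ e t) (γ e 1) ≤ (R + 1) * (1 - t) :=
    fun e t ht => by
      have := hlip e t ht 1 I1
      rwa [abs_sub_comm, abs_of_nonneg (sub_nonneg.2 ht.2)] at this
  have hlen : ∀ t ∈ Icc (0 : ℝ) 1, (R + 1) * t ≤ R + 1 ∧ (R + 1) * (1 - t) ≤ R + 1 :=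
    fun t ht => ⟨by nlinarith [ht.2], by nlinarith [ht.1]⟩
  have hγT : ∀ e e', e ≠ e' → ∀ t ∈ Icc (0 : ℝ) 1, ∀ z ∈ T e', K + R + 3 ≤ dist (γ e t) z := by
    intro e e' hee t ht z hz
    have e1 := hPP' e e' hee _ (hTP e (h1 e)) z (hTP e' hz)
    have e2 := hd1 e t ht
    have e3 := dist_triangle_left (γ e 1) z (γ e t)
    linarith [(hlen t ht).2]
  have hγA : ∀ e v, v ≠ tl e → ∀ t ∈ Icc (0 : ℝ) 1, ∀ z ∈ closure (B v),
      K + R + 3 ≤ dist (γ e t) z := by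
    intro e v hv t ht z hz
    have e1 := hAA _ _ hv.symm _ (h0 e) z hz
    have e2 := hd0 e t ht
    have e3 := dist_triangle_left (γ e 0) z (γ e t)
    linarith [(hlen t ht).1]
  have hTT : ∀ e e', e ≠ e' → ∀ x ∈ T e, ∀ y ∈ T e', K ≤ dist x y := fun e e' hee x hx y hy => by
    linarith [hPP' e e' hee x (hTP e hx) y (hTP e' hy)]
  have hTA' : ∀ e v, v ≠ hd e → ∀ x ∈ T e, ∀ y ∈ closure (B v), K ≤ dist x y := by
    intro e v hv x hx y hy
    by_cases hvt : v = tl e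
    · subst hvt
      exact hKR.trans (hTA e x hx y hy)
    · linarith [hPA e v hvt hv x (hTP e hx) y hy]
  have htlfar : ∀ e, ∀ t ∈ Icc (0 : ℝ) 1, ∀ z ∈ closure (B (tl e)) ∪ ⋃ e', ⋃ (_ : hd e' = tl e), T e',
      R * t - 1 ≤ dist (γ e t) z := by
    rintro e t ht z (hz | hz)
    · have e1 := hTA e _ (h1 e) z hz
      have e2 := hd1 e t ht
      have e3 := dist_triangle_left (γ e 1) z (γ e t)
      linarith [ht.1]
    · simp only [mem_iUnion] at hz
      obtain ⟨e', he', hz⟩ := hz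
      have hee : e ≠ e' := by
        rintro rfl
        exact (hadj e).ne he'.symm
      have := hγT e e' hee t ht z hz
      nlinarith [ht.2]
  have hhdfar : ∀ e, ∀ t ∈ Icc (0 : ℝ) 1, ∀ z ∈ closure (B (hd e)) ∪ ⋃ e', ⋃ (_ : hd e' = hd e), T e',
      R * (1 - t) - 1 ≤ dist (γ e t) z := by
    rintro e t ht z (hz | hz)
    · have := hγA e _ (hadj e).ne' t ht z hz
      nlinarith [ht.1]
    · simp only [mem_iUnion] at hz
      obtain ⟨e', he', hz⟩ := hz
      by_cases hee : e = e'
      · subst hee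
        have e1 := hTA e z hz _ (h0 e)
        have e2 := hd0 e t ht
        have e3 := dist_triangle_left z (γ e 0) (γ e t)
        linarith [ht.2]
      · have := hγT e e' hee t ht z hz
        nlinarith [ht.1]
  refine ⟨{
    D := fun v => closure (B v) ∪ ⋃ e, ⋃ (_ : hd e = v), T e
    γ := γ
    conn := ?_
    sep := ?_
    inj := hinj
    cont := ?_
    geo := ?_
    sepγ := ?_
    tl_far := htlfar
    hd_far := hhdfar
    far := ?_
    tl_mem := fun e => Or.inl (h0 e)
    hd_mem := fun e => Or.inr (by simp only [mem_iUnion]; exact ⟨e, rfl, h1 e⟩)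
    tl_only := ?_
    hd_only := ?_ }⟩
  · intro v
    obtain ⟨x, hx⟩ := (hconn v).closure.nonempty
    refine ⟨⟨x, Or.inl hx⟩, ?_⟩
    have hrw : closure (B v) ∪ ⋃ e, ⋃ (_ : hd e = v), T e =
        closure (B v) ∪ ⋃ e : {e // hd e = v}, (closure (B v) ∪ T e.1) := by
      ext z
      simp only [mem_union, mem_iUnion, Subtype.exists, exists_prop]
      grind
    rw [hrw]
    refine isPreconnected_of_forall x ?_
    rintro y (hy | hy)
    · exact ⟨_, subset_union_left, hx, hy, (hconn v).closure.isPreconnected⟩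
    · simp only [mem_iUnion] at hy
      obtain ⟨e, hy⟩ := hy
      refine ⟨closure (B v) ∪ T e.1, ?_, Or.inl hx, hy, ?_⟩
      · exact fun z hz => Or.inr (mem_iUnion.2 ⟨e, hz⟩)
      · obtain ⟨w, hw1, hw2⟩ := hTB e.1
        rw [e.2] at hw2
        exact IsPreconnected.union w hw2 hw1 (hconn v).closure.isPreconnected
          (hTc e.1).isPreconnected
  · rintro v v' hv x (hx | hx) y (hy | hy)
    · linarith [hAA v v' hv x hx y hy]
    · simp only [mem_iUnion] at hy
      obtain ⟨e, rfl, hy⟩ := hy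
      rw [dist_comm]
      exact hTA' e v hv y hy x hx
    · simp only [mem_iUnion] at hx
      obtain ⟨e, rfl, hx⟩ := hx
      exact hTA' e v' hv.symm x hx y hy
    · simp only [mem_iUnion] at hx hy
      obtain ⟨e, rfl, hx⟩ := hx
      obtain ⟨e', rfl, hy⟩ := hy
      exact hTT e e' (fun h => hv (h ▸ rfl)) x hx y hy
  · intro e
    have : LipschitzOnWith (Real.toNNReal (R + 1)) (γ e) (Icc 0 1) :=
      LipschitzOnWith.of_dist_le_mul fun s hs t ht => by
        rw [Real.coe_toNNReal _ (by linarith), Real.dist_eq]; exact hlip e s hs t ht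
    exact this.continuousOn
  · -- the endpoints are `R` apart and the arc is `(R + 1)`-Lipschitz
    have key : ∀ e, ∀ s ∈ Icc (0 : ℝ) 1, ∀ t ∈ Icc (0 : ℝ) 1, s ≤ t →
        R * (t - s) - 1 ≤ dist (γ e s) (γ e t) := by
      intro e s hs t ht hst
      have e1 := hTA e _ (h1 e) _ (h0 e)
      have e2 := hd0 e s hs
      have e3 := hd1 e t ht
      have e4 := dist_triangle4 (γ e 1) (γ e t) (γ e s) (γ e 0)
      rw [dist_comm (γ e 1) (γ e t), dist_comm (γ e t) (γ e s)] at e4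
      nlinarith [hs.1, ht.2]
    intro e s hs t ht
    rcases le_total s t with hst | hst
    · rw [abs_sub_comm, abs_of_nonneg (sub_nonneg.2 hst)]; exact key e s hs t ht hst
    · rw [dist_comm, abs_of_nonneg (sub_nonneg.2 hst)]; exact key e t ht s hs hst
  · intro e e' hee s hs t ht
    have e1 := hPP' e e' hee _ (hTP e (h1 e)) _ (hTP e' (h1 e'))
    have e2 := hd1 e s hs
    have e3 := hd1 e' t ht
    have e4 := dist_triangle4 (γ e 1) (γ e s) (γ e' t) (γ e' 1)
    rw [dist_comm (γ e 1) (γ e s)] at e4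
    linarith [(hlen s hs).2, (hlen t ht).2]
  · rintro e v hvt hvh t ht z (hz | hz)
    · linarith [hγA e v hvt t ht z hz]
    · simp only [mem_iUnion] at hz
      obtain ⟨e', rfl, hz⟩ := hz
      linarith [hγT e e' (fun h => hvh (h ▸ rfl)) t ht z hz]
  · rintro e t ht (hz | hz)
    · exact hA0 e t ht hz
    · simp only [mem_iUnion] at hz
      obtain ⟨e', he', hz⟩ := hz
      have hee : e ≠ e' := by
        rintro rfl
        exact (hadj e).ne he'.symm
      have := hγT e e' hee t ht _ hz
      rw [dist_self] at this
      linarith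
  · rintro e t ht (hz | hz)
    · have := hγA e _ (hadj e).ne' t ht _ hz
      rw [dist_self] at this
      linarith
    · simp only [mem_iUnion] at hz
      obtain ⟨e', he', hz⟩ := hz
      by_cases hee : e = e'
      · subst hee
        exact hT1 e t ht hz
      · have := hγT e e' hee t ht _ hz
        rw [dist_self] at this
        linarith

/-! ### Coordinates on a subdivision -/

/-- A subdivision presented by coordinates: each edge `e` of `Δ`, oriented from `tl e` to `hd e`, is
replaced by the path in `Δ'` with vertices `vert e 0, …, vert e (k e)`.  Only the values `vert e i`
with `i ≤ k e` are meaningful. -/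
structure SubdivisionData {W' W : Type*} (Δ' : SimpleGraph W') (Δ : SimpleGraph W) where
  φ : W → W'
  tl : Δ.edgeSet → W
  hd : Δ.edgeSet → W
  k : Δ.edgeSet → ℕ
  vert : Δ.edgeSet → ℕ → W'
  φ_inj : Function.Injective φ
  mk_eq : ∀ e, s(tl e, hd e) = e.1
  k_pos : ∀ e, 0 < k e
  vert_zero : ∀ e, vert e 0 = φ (tl e)
  vert_k : ∀ e, vert e (k e) = φ (hd e)
  vert_injOn : ∀ e i j, i ≤ k e → j ≤ k e → vert e i = vert e j → i = j
  vert_ne : ∀ e i v, 0 < i → i < k e → vert e i ≠ φ v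
  vert_disj : ∀ e e' i j, 0 < i → i < k e → 0 < j → j < k e' → vert e i = vert e' j → e = e'
  cover : ∀ x, (∃ v, x = φ v) ∨ ∃ e i, 0 < i ∧ i < k e ∧ x = vert e i
  adj : ∀ e i, i < k e → Δ'.Adj (vert e i) (vert e (i + 1))
  adj_cover : ∀ x y, Δ'.Adj x y → ∃ e i, i < k e ∧ s(x, y) = s(vert e i, vert e (i + 1))

lemma IsSubdivisionOf.nonempty_data {W' W : Type*} {Δ' : SimpleGraph W'} {Δ : SimpleGraph W}
    (h : IsSubdivisionOf Δ' Δ) : Nonempty (SubdivisionData Δ' Δ) := by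
  obtain ⟨φ, P, hφ, hpath, hrev, hbr, hdisj, hcov, hecov⟩ := h
  have hor : ∀ e : Δ.edgeSet, ∃ p : W × W, s(p.1, p.2) = e.1 := by
    rintro ⟨⟨u, v⟩, _⟩
    exact ⟨(u, v), rfl⟩
  choose p hp using hor
  have hadj : ∀ e, Δ.Adj (p e).1 (p e).2 := fun e => by
    rw [← SimpleGraph.mem_edgeSet, hp]; exact e.2
  set Q : ∀ e, Δ'.Walk (φ (p e).1) (φ (p e).2) := fun e => P _ _ (hadj e)
  have hinj : ∀ e i j, i ≤ (Q e).length → j ≤ (Q e).length →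
      (Q e).getVert i = (Q e).getVert j → i = j := fun e i j hi hj hij =>
    (hpath _ _ (hadj e)).getVert_injOn hi hj hij
  have hne : ∀ e i v, 0 < i → i < (Q e).length → (Q e).getVert i ≠ φ v := by
    intro e i v hi hik heq
    rcases hbr _ _ (hadj e) _ ((Q e).getVert_mem_support i) ⟨v, heq.symm⟩ with h | h
    · exact hi.ne' (hinj e i 0 hik.le (Nat.zero_le _) (by rw [h, SimpleGraph.Walk.getVert_zero]))
    · exact hik.ne (hinj e i _ hik.le le_rfl (by rw [h, SimpleGraph.Walk.getVert_length]))
  have hPrev : ∀ u v (h : Δ.Adj u v), P v u h.symm = (P u v h).reverse := fun u v h =>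
    SimpleGraph.Walk.ext_support (by rw [hrev, SimpleGraph.Walk.support_reverse])
  have hP : ∀ u v (h : Δ.Adj u v) a b (h' : Δ.Adj a b), s(a, b) = s(u, v) →
      (∀ w, w ∈ (P u v h).support → w ∈ (P a b h').support) ∧
      (∀ f, f ∈ (P u v h).edges → f ∈ (P a b h').edges) := by
    intro u v h a b h' hs
    rcases Sym2.eq_iff.1 hs with ⟨rfl, rfl⟩ | ⟨rfl, rfl⟩
    · exact ⟨fun _ h => h, fun _ h => h⟩
    · rw [hPrev _ _ h']
      simp
  refine ⟨{
    φ := φ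
    tl := fun e => (p e).1
    hd := fun e => (p e).2
    k := fun e => (Q e).length
    vert := fun e => (Q e).getVert
    φ_inj := hφ
    mk_eq := hp
    k_pos := ?_
    vert_zero := fun e => (Q e).getVert_zero
    vert_k := fun e => (Q e).getVert_length
    vert_injOn := hinj
    vert_ne := hne
    vert_disj := ?_
    cover := ?_
    adj := fun e i hi => (Q e).adj_getVert_succ hi
    adj_cover := ?_ }⟩
  · intro e
    by_contra h0
    have h0 : (Q e).length = 0 := by omega
    exact (hadj e).ne (hφ (SimpleGraph.Walk.eq_of_length_eq_zero h0))
  · intro e e' i j hi hik hj hjk heq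
    by_contra hee
    have hs : s((p e).1, (p e).2) ≠ s((p e').1, (p e').2) := by
      rw [hp, hp]; exact fun h => hee (Subtype.ext h)
    rcases (hdisj _ _ _ _ (hadj e) (hadj e') hs _ ((Q e).getVert_mem_support i)
      (heq ▸ (Q e').getVert_mem_support j)).1 with h | h
    · exact hne e i _ hi hik h
    · exact hne e i _ hi hik h
  · intro x
    rcases hcov x with ⟨v, rfl⟩ | ⟨u, v, h, hx⟩
    · exact Or.inl ⟨v, rfl⟩
    · set e : Δ.edgeSet := ⟨s(u, v), h⟩ with he
      have hx' := (hP u v h _ _ (hadj e) (by rw [hp])).1 x hx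
      obtain ⟨i, rfl, hi⟩ := SimpleGraph.Walk.mem_support_iff_exists_getVert.1 hx'
      rcases Nat.eq_zero_or_pos i with rfl | hi0
      · exact Or.inl ⟨_, SimpleGraph.Walk.getVert_zero _⟩
      · rcases hi.eq_or_lt with rfl | hi1
        · exact Or.inl ⟨_, SimpleGraph.Walk.getVert_length _⟩
        · exact Or.inr ⟨e, i, hi0, hi1, rfl⟩
  · intro x y hxy
    obtain ⟨u, v, h, hx⟩ := hecov s(x, y) hxy
    set e : Δ.edgeSet := ⟨s(u, v), h⟩ with he
    have hx' := (hP u v h _ _ (hadj e) (by rw [hp])).2 _ hx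
    obtain ⟨i, hi, hi'⟩ := (SimpleGraph.Walk.mk_mem_edges_iff_exists _).1 hx'
    exact ⟨e, i, hi, hi'.symm⟩

namespace SubdivisionData

variable {W' W : Type*} {Δ' : SimpleGraph W'} {Δ : SimpleGraph W}

lemma tl_ne_hd (S : SubdivisionData Δ' Δ) (e : Δ.edgeSet) : S.tl e ≠ S.hd e := by
  have h : Δ.Adj (S.tl e) (S.hd e) := by
    rw [← SimpleGraph.mem_edgeSet, S.mk_eq]; exact e.2
  exact h.ne

lemma eq_of_vert_eq (S : SubdivisionData Δ' Δ) {e e' : Δ.edgeSet} {i j : ℕ} (hi : 0 < i)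
    (hik : i < S.k e) (hj : j ≤ S.k e') (h : S.vert e i = S.vert e' j) : e = e' := by
  rcases Nat.eq_zero_or_pos j with rfl | hj0
  · exact absurd (h.trans (S.vert_zero e')) (S.vert_ne e i _ hi hik)
  · rcases hj.eq_or_lt with rfl | hj1
    · exact absurd (h.trans (S.vert_k e')) (S.vert_ne e i _ hi hik)
    · exact S.vert_disj e e' i j hi hik hj0 hj1 h

/-- Distinct positions give distinct edges of the subdivision. -/
lemma edge_unique (S : SubdivisionData Δ' Δ) {e e' : Δ.edgeSet} {i j : ℕ} (hi : i < S.k e)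
    (hj : j < S.k e')
    (h : s(S.vert e i, S.vert e (i + 1)) = s(S.vert e' j, S.vert e' (j + 1))) :
    e = e' ∧ i = j := by
  have hee : e = e' := by
    by_contra hne
    have h1 : ∀ a, (a = i ∨ a = i + 1) → ∀ b, (b = j ∨ b = j + 1) →
        S.vert e a = S.vert e' b → (a = 0 ∨ a = S.k e) ∧ (b = 0 ∨ b = S.k e') := by
      intro a ha b hb hab
      constructor
      · by_contra hcon
        exact hne (S.eq_of_vert_eq (by omega) (by omega) (by omega) hab)
      · by_contra hcon
        exact hne (S.eq_of_vert_eq (by omega) (by omega) (by omega) hab.symm).symm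
    have h2 : i = 0 ∧ i + 1 = S.k e ∧ j = 0 ∧ j + 1 = S.k e' := by
      rcases Sym2.eq_iff.1 h with ⟨ha, hb⟩ | ⟨ha, hb⟩
      · have e1 := h1 i (Or.inl rfl) j (Or.inl rfl) ha
        have e2 := h1 (i + 1) (Or.inr rfl) (j + 1) (Or.inr rfl) hb
        omega
      · have e1 := h1 i (Or.inl rfl) (j + 1) (Or.inr rfl) ha
        have e2 := h1 (i + 1) (Or.inr rfl) j (Or.inl rfl) hb
        omega
    obtain ⟨h3, h4, h5, h6⟩ := h2
    rw [h4, h6, h3, h5, S.vert_zero, S.vert_zero, S.vert_k, S.vert_k] at h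
    have h7 : Sym2.map S.φ s(S.tl e, S.hd e) = Sym2.map S.φ s(S.tl e', S.hd e') := h
    have h8 := Sym2.map.injective S.φ_inj h7
    rw [S.mk_eq, S.mk_eq] at h8
    exact hne (Subtype.ext h8)
  subst hee
  refine ⟨rfl, ?_⟩
  rcases Sym2.eq_iff.1 h with ⟨ha, hb⟩ | ⟨ha, hb⟩
  · exact S.vert_injOn e i j hi.le hj.le ha
  · have e1 := S.vert_injOn e i (j + 1) hi.le hj ha
    have e2 := S.vert_injOn e (i + 1) j hi hj.le hb
    omega

end SubdivisionData

/-! ### Subdividing the arcs of a skeleton -/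

/-- The `j`-th of `m` equal subintervals of `[0, 1]`. -/
def seg (m j : ℕ) : Set ℝ := Icc (((j : ℝ) - 1) / m) (j / m)

lemma mem_seg {m j : ℕ} (hm : 0 < m) {t : ℝ} :
    t ∈ seg m j ↔ (j : ℝ) - 1 ≤ t * m ∧ t * m ≤ j := by
  have : (0 : ℝ) < m := by exact_mod_cast hm
  rw [seg, mem_Icc, div_le_iff₀ this, le_div_iff₀ this]

lemma seg_subset {m j : ℕ} (hj : 1 ≤ j) (hjm : j ≤ m) : seg m j ⊆ Icc 0 1 := by
  intro t ht
  have hm : (0 : ℝ) < m := by exact_mod_cast (by omega : 0 < m)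
  have h1 : (1 : ℝ) ≤ j := by exact_mod_cast hj
  have h2 : (j : ℝ) ≤ m := by exact_mod_cast hjm
  obtain ⟨h3, h4⟩ := (mem_seg (by omega)).1 ht
  constructor
  · by_contra hcon
    nlinarith
  · by_contra hcon
    nlinarith

lemma isArcIn_image {X : Type*} [MetricSpace X] {γ : ℝ → X} (hc : ContinuousOn γ (Icc 0 1))
    (hi : InjOn γ (Icc 0 1)) {c d : ℝ} (h0 : 0 ≤ c) (hcd : c < d) (h1 : d ≤ 1) :
    IsArcIn (γ '' Icc c d) (γ c) (γ d) := by
  have hmem : ∀ t : unitInterval, c + t * (d - c) ∈ Icc (0 : ℝ) 1 := fun t =>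
    ⟨by nlinarith [t.2.1], by nlinarith [t.2.2]⟩
  refine ⟨⟨⟨fun t => γ (c + t * (d - c)), ?_⟩, by simp, by simp⟩, ?_, ?_⟩
  · exact hc.comp_continuous (by fun_prop) hmem
  · intro s t hst
    have h2 := hi (hmem s) (hmem t) hst
    have h3 : (s : ℝ) * (d - c) = t * (d - c) := by linarith
    exact Subtype.ext (mul_right_cancel₀ (sub_ne_zero.2 hcd.ne') h3)
  · ext z
    constructor
    · rintro ⟨t, rfl⟩
      exact ⟨_, ⟨by nlinarith [t.2.1], by nlinarith [t.2.2]⟩, rfl⟩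
    · rintro ⟨x, hx, rfl⟩
      have hpos : 0 < d - c := sub_pos.2 hcd
      refine ⟨⟨(x - c) / (d - c), div_nonneg (by linarith [hx.1]) hpos.le,
        (div_le_one hpos).2 (by linarith [hx.2])⟩, ?_⟩
      change γ (c + (x - c) / (d - c) * (d - c)) = γ x
      rw [div_mul_cancel₀ _ hpos.ne']
      congr 1
      ring

lemma IsArcIn.symm {X : Type*} [TopologicalSpace X] {S : Set X} {a b : X} (h : IsArcIn S a b) :
    IsArcIn S b a := by
  obtain ⟨p, hp, hS⟩ := h
  refine ⟨p.symm, fun s t hst => unitInterval.symm_bijective.1 (hp hst), ?_⟩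
  rw [← hS]
  exact p.symm_range

/-- Fat minors of a subdivision are read off a skeleton: the arc `γ e` is divided into `2 k - 1`
equal pieces, which alternately serve as branch paths and as branch sets of the `k - 1` subdividing
vertices of `e`. -/
lemma FatSkeleton.hasMetricFatMinor {X : Type*} [MetricSpace X] {W W' : Type*}
    {Δ : SimpleGraph W} {Δ' : SimpleGraph W'} (S : SubdivisionData Δ' Δ) {K R : ℝ} (hK : 0 < K)
    (hR : ∀ e, (K + 1) * ((2 * S.k e - 1 : ℕ) : ℝ) ≤ R) (F : FatSkeleton S.tl S.hd X K R) :
    HasMetricFatMinor Δ' X K := by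
  set m : Δ.edgeSet → ℕ := fun e => 2 * S.k e - 1 with hm
  have hmk : ∀ e, m e + 1 = 2 * S.k e := fun e => by
    have := S.k_pos e
    simp only [hm]; omega
  have hmpos : ∀ e, 0 < m e := fun e => by have := S.k_pos e; simp only [hm]; omega
  have hgap : ∀ e, ∀ δ : ℝ, 1 ≤ δ * m e → K ≤ R * δ - 1 := by
    intro e δ hδ
    have h1 : (0 : ℝ) < m e := by exact_mod_cast hmpos e
    have h2 : 0 < δ := by by_contra hcon; nlinarith
    have h3 := mul_le_mul_of_nonneg_right (hR e) h2.le
    have h4 : K + 1 ≤ (K + 1) * (δ * m e) := le_mul_of_one_le_right (by linarith) hδ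
    have h5 : (K + 1) * (δ * m e) = (K + 1) * (m e : ℝ) * δ := by ring
    linarith
  have hgeo : ∀ e j j', 1 ≤ j → j + 1 < j' → j' ≤ m e → ∀ s ∈ seg (m e) j, ∀ t ∈ seg (m e) j',
      K ≤ dist (F.γ e s) (F.γ e t) := by
    intro e j j' hj hjj hj' s hs t ht
    refine (hgap e |s - t| ?_).trans (F.geo e s (seg_subset hj (by omega) hs) t
      (seg_subset (by omega) hj' ht))
    have h1 := ((mem_seg (hmpos e)).1 hs).2
    have h2 := ((mem_seg (hmpos e)).1 ht).1
    have h3 : (j : ℝ) + 2 ≤ j' := by exact_mod_cast hjj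
    have h4 : (t - s) * m e ≤ |s - t| * m e := by
      refine mul_le_mul_of_nonneg_right ?_ (Nat.cast_nonneg _)
      rw [abs_sub_comm]; exact le_abs_self _
    linarith
  set B : W' → Set X := fun x => {z | (∃ v, x = S.φ v ∧ z ∈ F.D v) ∨
    ∃ e i, 0 < i ∧ i < S.k e ∧ x = S.vert e i ∧ z ∈ F.γ e '' seg (m e) (2 * i)} with hB
  set P : Sym2 W' → Set X := fun f => {z | ∃ e i, i < S.k e ∧
    f = s(S.vert e i, S.vert e (i + 1)) ∧ z ∈ F.γ e '' seg (m e) (2 * i + 1)} with hP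
  have hBφ : ∀ v, B (S.φ v) = F.D v := by
    intro v
    ext z
    constructor
    · rintro (⟨v', h, hz⟩ | ⟨e, i, hi, hik, h, -⟩)
      · rwa [S.φ_inj h]
      · exact absurd h.symm (S.vert_ne e i v hi hik)
    · exact fun hz => Or.inl ⟨v, rfl, hz⟩
  have hBv : ∀ e i, 0 < i → i < S.k e → B (S.vert e i) = F.γ e '' seg (m e) (2 * i) := by
    intro e i hi hik
    ext z
    constructor
    · rintro (⟨v', h, hz⟩ | ⟨e', i', hi', hik', h, hz⟩)
      · exact absurd h (S.vert_ne e i v' hi hik)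
      · obtain rfl := S.vert_disj e e' i i' hi hik hi' hik' h
        obtain rfl := S.vert_injOn e i i' hik.le hik'.le h
        exact hz
    · exact fun hz => Or.inr ⟨e, i, hi, hik, rfl, hz⟩
  have hPv : ∀ e i, i < S.k e →
      P s(S.vert e i, S.vert e (i + 1)) = F.γ e '' seg (m e) (2 * i + 1) := by
    intro e i hik
    ext z
    constructor
    · rintro ⟨e', i', hik', h, hz⟩
      obtain ⟨rfl, rfl⟩ := S.edge_unique hik hik' h
      exact hz
    · exact fun hz => ⟨e, i, hik, rfl, hz⟩
  -- `vert e i` sits at position `2 * i` along `e`; non-neighbouring positions are `K`-far apart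
  have hfar : ∀ e j, 1 ≤ j → j ≤ m e → ∀ t ∈ seg (m e) j, ∀ x,
      (∀ i ≤ S.k e, x = S.vert e i → j + 1 < 2 * i ∨ 2 * i + 1 < j) →
      ∀ z ∈ B x, K ≤ dist (F.γ e t) z := by
    intro e j hj hjm t ht x hx z hz
    have htI := seg_subset hj hjm ht
    obtain ⟨ht1, ht2⟩ := (mem_seg (hmpos e)).1 ht
    rcases hz with ⟨v, rfl, hz⟩ | ⟨e', i, hi, hik, rfl, s, hs, rfl⟩
    · by_cases hvt : v = S.tl e
      · subst hvt
        have hj2 : 2 ≤ j := by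
          have := hx 0 (Nat.zero_le _) (S.vert_zero e).symm
          omega
        have hj2' : (2 : ℝ) ≤ j := by exact_mod_cast hj2
        exact (hgap e t (by linarith)).trans (F.tl_far e t htI z hz)
      · by_cases hvh : v = S.hd e
        · subst hvh
          have hj2 : j + 1 ≤ m e := by
            have := hx _ le_rfl (S.vert_k e).symm
            have := hmk e
            omega
          have hj2' : (j : ℝ) + 1 ≤ m e := by exact_mod_cast hj2
          exact (hgap e (1 - t) (by linarith)).trans (F.hd_far e t htI z hz)
        · exact F.far e v hvt hvh t htI z hz
    · have := hmk e'
      by_cases hee : e = e'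
      · subst hee
        rcases hx i hik.le rfl with h | h
        · exact hgeo e j (2 * i) hj h (by omega) t ht s hs
        · rw [dist_comm]
          exact hgeo e (2 * i) j (by omega) h hjm s hs t ht
      · exact F.sepγ e e' hee t htI s (seg_subset (by omega) (by omega) hs)
  have hBB : ∀ x x', x ≠ x' → ∀ z ∈ B x, ∀ z' ∈ B x', K ≤ dist z z' := by
    have hinner : ∀ e i, 0 < i → i < S.k e → ∀ x', S.vert e i ≠ x' →
        ∀ z ∈ F.γ e '' seg (m e) (2 * i), ∀ z' ∈ B x', K ≤ dist z z' := by
      rintro e i hi hik x' hne _ ⟨t, ht, rfl⟩ z' hz'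
      have := hmk e
      refine hfar e (2 * i) (by omega) (by omega) t ht x' ?_ z' hz'
      rintro i' hi' rfl
      have : i ≠ i' := fun h => hne (h ▸ rfl)
      omega
    intro x x' hne z hz z' hz'
    rcases id hz with ⟨v, rfl, hv⟩ | ⟨e, i, hi, hik, rfl, hzi⟩
    · rcases id hz' with ⟨v', rfl, hv'⟩ | ⟨e', i', hi', hik', rfl, hzi'⟩
      · exact F.sep v v' (fun h => hne (h ▸ rfl)) z hv z' hv'
      · rw [dist_comm]
        exact hinner e' i' hi' hik' _ hne.symm z' hzi' z hz
    · exact hinner e i hi hik x' hne z hzi z' hz'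
  have hPP : ∀ f ∈ Δ'.edgeSet, ∀ f' ∈ Δ'.edgeSet, f ≠ f' → ∀ x ∈ P f, ∀ y ∈ P f', K ≤ dist x y := by
    rintro f - f' - hne _ ⟨e, i, hik, rfl, s, hs, rfl⟩ _ ⟨e', i', hik', rfl, t, ht, rfl⟩
    have h1 := hmk e
    have h2 := hmk e'
    by_cases hee : e = e'
    · subst hee
      have hii : i ≠ i' := fun h => hne (h ▸ rfl)
      rcases lt_or_gt_of_ne hii with h | h
      · exact hgeo e _ _ (by omega) (by omega) (by omega) s hs t ht
      · rw [dist_comm]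
        exact hgeo e _ _ (by omega) (by omega) (by omega) t ht s hs
    · exact F.sepγ e e' hee s (seg_subset (by omega) (by omega) hs) t
        (seg_subset (by omega) (by omega) ht)
  have hPB : ∀ e i, i < S.k e → ∀ x, x ≠ S.vert e i → x ≠ S.vert e (i + 1) →
      ∀ y ∈ P s(S.vert e i, S.vert e (i + 1)), ∀ z ∈ B x, K ≤ dist y z := by
    intro e i hik x hx1 hx2 y hy z hz
    rw [hPv e i hik] at hy
    obtain ⟨t, ht, rfl⟩ := hy
    have := hmk e
    refine hfar e (2 * i + 1) (by omega) (by omega) t ht x ?_ z hz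
    rintro i' hi' rfl
    have h1 : i' ≠ i := fun h => hx1 (h ▸ rfl)
    have h2 : i' ≠ i + 1 := fun h => hx2 (h ▸ rfl)
    omega
  have harc : ∀ e i, i < S.k e → ∃ a ∈ B (S.vert e i), ∃ b ∈ B (S.vert e (i + 1)),
      IsArcIn (P s(S.vert e i, S.vert e (i + 1))) a b ∧
      P s(S.vert e i, S.vert e (i + 1)) ∩ (⋃ x, B x) = {a, b} := by
    intro e i hik
    have hmke := hmk e
    have hm0 : (0 : ℝ) < m e := by exact_mod_cast hmpos e
    have hmk' : (m e : ℝ) + 1 = 2 * S.k e := by exact_mod_cast hmke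
    have hsegI : seg (m e) (2 * i + 1) ⊆ Icc 0 1 := seg_subset (by omega) (by omega)
    set c : ℝ := 2 * i / m e with hc
    set d : ℝ := (2 * i + 1) / m e with hd
    have hcm : c * m e = 2 * i := div_mul_cancel₀ _ hm0.ne'
    have hdm : d * m e = 2 * i + 1 := div_mul_cancel₀ _ hm0.ne'
    have hcd : c < d := by rw [hc, hd]; gcongr; linarith
    have hseg : seg (m e) (2 * i + 1) = Icc c d := by
      rw [seg, hc, hd]; push_cast; congr 2; ring
    have hcI : c ∈ Icc (0 : ℝ) 1 := hsegI (hseg ▸ left_mem_Icc.2 hcd.le)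
    have hdI : d ∈ Icc (0 : ℝ) 1 := hsegI (hseg ▸ right_mem_Icc.2 hcd.le)
    -- the vertex at either end of the piece meets it in the respective endpoint only
    have hca : ∀ t ∈ seg (m e) (2 * i + 1), F.γ e t ∈ B (S.vert e i) ↔ t = c := by
      intro t ht
      rcases Nat.eq_zero_or_pos i with rfl | hi
      · have hc0 : c = 0 := by simp [hc]
        rw [S.vert_zero, hBφ, hc0]
        exact ⟨F.tl_only e t (hsegI ht), fun h => h ▸ F.tl_mem e⟩
      · rw [hBv e i hi hik]
        constructor
        · rintro ⟨s, hs, hst⟩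
          have := F.inj e (seg_subset (by omega) (by omega) hs) (hsegI ht) hst
          subst this
          have h1 := ((mem_seg (hmpos e)).1 hs).2
          have h2 := ((mem_seg (hmpos e)).1 ht).1
          push_cast at h1 h2
          exact mul_right_cancel₀ hm0.ne' (by linarith : s * m e = c * m e)
        · rintro rfl
          refine ⟨c, (mem_seg (hmpos e)).2 ?_, rfl⟩
          rw [hcm]; push_cast
          constructor <;> linarith
    have hdb : ∀ t ∈ seg (m e) (2 * i + 1), F.γ e t ∈ B (S.vert e (i + 1)) ↔ t = d := by
      intro t ht
      have hik' : i + 1 ≤ S.k e := hik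
      rcases hik'.eq_or_lt with hi | hi
      · have hd1 : d = 1 := by
          rw [hd, div_eq_one_iff_eq hm0.ne']
          rw [← hi] at hmk'
          push_cast at hmk'
          linarith
        rw [hi, S.vert_k, hBφ, hd1]
        exact ⟨F.hd_only e t (hsegI ht), fun h => h ▸ F.hd_mem e⟩
      · rw [hBv e (i + 1) (by omega) hi]
        constructor
        · rintro ⟨s, hs, hst⟩
          have := F.inj e (seg_subset (by omega) (by omega) hs) (hsegI ht) hst
          subst this
          have h1 := ((mem_seg (hmpos e)).1 hs).1
          have h2 := ((mem_seg (hmpos e)).1 ht).2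
          push_cast at h1 h2
          exact mul_right_cancel₀ hm0.ne' (by linarith : s * m e = d * m e)
        · rintro rfl
          refine ⟨d, (mem_seg (hmpos e)).2 ?_, rfl⟩
          rw [hdm]; push_cast
          constructor <;> linarith
    have hcs : c ∈ seg (m e) (2 * i + 1) := hseg ▸ left_mem_Icc.2 hcd.le
    have hds : d ∈ seg (m e) (2 * i + 1) := hseg ▸ right_mem_Icc.2 hcd.le
    have ha := (hca c hcs).2 rfl
    have hb := (hdb d hds).2 rfl
    refine ⟨F.γ e c, ha, F.γ e d, hb, ?_, ?_⟩
    · rw [hPv e i hik, hseg]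
      exact isArcIn_image (F.cont e) (F.inj e) hcI.1 hcd hdI.2
    · ext z
      constructor
      · rintro ⟨hz, hzB⟩
        obtain ⟨x, hx⟩ := mem_iUnion.1 hzB
        by_cases h1 : x = S.vert e i
        · rw [hPv e i hik] at hz
          obtain ⟨t, ht, rfl⟩ := hz
          subst h1
          exact Or.inl (by rw [(hca t ht).1 hx])
        · by_cases h2 : x = S.vert e (i + 1)
          · rw [hPv e i hik] at hz
            obtain ⟨t, ht, rfl⟩ := hz
            subst h2
            exact Or.inr (by rw [(hdb t ht).1 hx]; rfl)
          · have := hPB e i hik x h1 h2 z hz z hx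
            rw [dist_self] at this
            linarith
      · rw [hPv e i hik]
        rintro (rfl | rfl)
        · exact ⟨⟨c, hcs, rfl⟩, mem_iUnion.2 ⟨_, ha⟩⟩
        · exact ⟨⟨d, hds, rfl⟩, mem_iUnion.2 ⟨_, hb⟩⟩
  have hdis : ∀ {Y Z : Set X}, (∀ y ∈ Y, ∀ z ∈ Z, K ≤ dist y z) → Disjoint Y Z := by
    intro Y Z h
    rw [disjoint_left]
    intro y hy hz
    have := h y hy y hz
    rw [dist_self] at this
    linarith
  refine ⟨B, P, ?_, fun x x' h => hdis (hBB x x' h), ?_, fun f hf f' hf' h =>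
    hdis (hPP f hf f' hf' h), hBB, hPP, ?_⟩
  · intro x
    rcases S.cover x with ⟨v, rfl⟩ | ⟨e, i, hi, hik, rfl⟩
    · rw [hBφ]; exact F.conn v
    · rw [hBv e i hi hik]
      have := hmk e
      refine (isConnected_Icc ?_).image _ ((F.cont e).mono (seg_subset (by omega) (by omega)))
      gcongr
      linarith
  · intro x y hxy
    obtain ⟨e, i, hik, h⟩ := S.adj_cover x y hxy
    obtain ⟨a, ha, b, hb, h1, h2⟩ := harc e i hik
    rw [← h] at h1 h2
    rcases Sym2.eq_iff.1 h with ⟨rfl, rfl⟩ | ⟨rfl, rfl⟩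
    · exact ⟨a, ha, b, hb, h1, h2⟩
    · exact ⟨b, hb, a, ha, h1.symm, by rw [h2, pair_comm]⟩
  · intro x y hxy w hw1 hw2
    obtain ⟨e, i, hik, h⟩ := S.adj_cover x y hxy
    rw [h]
    rcases Sym2.eq_iff.1 h with ⟨rfl, rfl⟩ | ⟨rfl, rfl⟩
    · exact hPB e i hik w hw1 hw2
    · exact hPB e i hik w hw2 hw1

/-! ### Contracting subdivided edges -/

/-- Contracting the fibres of `ρ : W' → W` in `Δ'`: if every fibre is connected in `Δ'` (to the
point `φ v`) and every edge of `Δ` lifts to an edge of `Δ'`, then a fat `Δ'`-minor yields a fat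
`Δ`-minor.  The new branch set of `v` is the union of the branch sets over the fibre of `v` and of
the branch paths of the edges inside this fibre. -/
lemma HasMetricFatMinor.of_contraction {X : Type*} [MetricSpace X] {W' W : Type*}
    {Δ' : SimpleGraph W'} {Δ : SimpleGraph W} {K : ℝ} (hK : 0 < K)
    (ρ : W' → W) (φ : W → W') (hρφ : ∀ v, ρ (φ v) = v)
    (hconn : ∀ x, Relation.ReflTransGen (fun a b => Δ'.Adj a b ∧ ρ a = ρ b) (φ (ρ x)) x)
    (hadj : ∀ u w, Δ.Adj u w → ∃ x y, Δ'.Adj x y ∧ ρ x = u ∧ ρ y = w)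
    (h : HasMetricFatMinor Δ' X K) : HasMetricFatMinor Δ X K := by
  obtain ⟨B, P, hBc, hBd, hP, hPd, hBB, hPP, hPB⟩ := h
  have hψ : ∀ e : Sym2 W, ∃ f : Sym2 W', e ∈ Δ.edgeSet → f ∈ Δ'.edgeSet ∧ f.map ρ = e := by
    intro e
    induction e with | _ u w
    by_cases he : Δ.Adj u w
    · obtain ⟨x, y, hxy, rfl, rfl⟩ := hadj u w he
      exact ⟨s(x, y), fun _ => ⟨hxy, rfl⟩⟩
    · exact ⟨s(φ u, φ u), fun h => absurd h he⟩
  choose ψ hψ using hψ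
  -- every edge of `Δ` lifts along `ψ` with matching orientation
  have hlift : ∀ u w, Δ.Adj u w →
      ∃ x y, Δ'.Adj x y ∧ ρ x = u ∧ ρ y = w ∧ ψ s(u, w) = s(x, y) := by
    intro u w huw
    obtain ⟨h1, h2⟩ := hψ s(u, w) huw
    generalize ψ s(u, w) = f at h1 h2
    induction f with | _ x y
    rcases Sym2.eq_iff.1 h2 with ⟨hx, hy⟩ | ⟨hx, hy⟩
    · exact ⟨x, y, h1, hx, hy, rfl⟩
    · exact ⟨y, x, Δ'.adj_symm h1, hy, hx, Sym2.eq_swap⟩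
  let S : W' → Set X := fun x => B x ∪ ⋃ y ∈ {y | Δ'.Adj x y ∧ ρ x = ρ y}, P s(x, y)
  let C : W → Set X := fun v => ⋃ x ∈ {x | ρ x = v}, S x
  have hC : ∀ v z, z ∈ C v ↔ (∃ x, ρ x = v ∧ z ∈ B x) ∨
      ∃ x y, Δ'.Adj x y ∧ ρ x = v ∧ ρ y = v ∧ z ∈ P s(x, y) := by
    intro v z
    simp only [C, S, mem_iUnion, mem_union, mem_ofPred_eq, exists_prop]
    constructor
    · rintro ⟨x, hx, hz | ⟨y, ⟨hxy, he⟩, hz⟩⟩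
      · exact Or.inl ⟨x, hx, hz⟩
      · exact Or.inr ⟨x, y, hxy, hx, he ▸ hx, hz⟩
    · rintro (⟨x, hx, hz⟩ | ⟨x, y, hxy, hx, hy, hz⟩)
      · exact ⟨x, hx, Or.inl hz⟩
      · exact ⟨x, hx, Or.inr ⟨y, ⟨hxy, hx.trans hy.symm⟩, hz⟩⟩
  have hPc : ∀ x y, Δ'.Adj x y → IsConnected (P s(x, y)) := by
    intro x y hxy
    obtain ⟨a, -, b, -, ⟨p, -, hp⟩, -⟩ := hP x y hxy
    rw [← hp]
    exact isConnected_range p.continuous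
  have hSc : ∀ x, IsConnected (S x) := by
    intro x
    refine ⟨(hBc x).nonempty.mono subset_union_left, ?_⟩
    obtain ⟨z, hz⟩ := (hBc x).nonempty
    refine isPreconnected_of_forall z ?_
    rintro w (hw | hw)
    · exact ⟨B x, subset_union_left, hz, hw, (hBc x).isPreconnected⟩
    · simp only [mem_iUnion, mem_ofPred_eq, exists_prop] at hw
      obtain ⟨y, hy, hw⟩ := hw
      obtain ⟨a, ha, b, -, -, hab⟩ := hP x y hy.1
      have haP : a ∈ P s(x, y) := (hab.ge (mem_insert _ _)).1
      refine ⟨B x ∪ P s(x, y), union_subset_union_right _ ?_, Or.inl hz, Or.inr hw,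
        (hBc x).isPreconnected.union a ha haP (hPc x y hy.1).isPreconnected⟩
      exact subset_biUnion_of_mem (u := fun y => P s(x, y)) hy
  have hSS : ∀ x y, Δ'.Adj x y → ρ x = ρ y → (S x ∩ S y).Nonempty := by
    intro x y hxy he
    obtain ⟨z, hz⟩ := (hPc x y hxy).nonempty
    refine ⟨z, Or.inr (mem_biUnion (x := y) ⟨hxy, he⟩ hz), Or.inr ?_⟩
    exact mem_biUnion (x := x) ⟨hxy.symm, he.symm⟩ (by rwa [Sym2.eq_swap])
  have hCc : ∀ v, IsConnected (C v) := by
    intro v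
    have key : ∀ x y, ρ x = v → Relation.ReflTransGen (fun a b => Δ'.Adj a b ∧ ρ a = ρ b) x y →
        ρ y = v ∧ Relation.ReflTransGen
          (fun i j => (S i ∩ S j).Nonempty ∧ i ∈ {x | ρ x = v}) x y ∧
        Relation.ReflTransGen
          (fun i j => (S i ∩ S j).Nonempty ∧ i ∈ {x | ρ x = v}) y x := by
      intro x y hx hxy
      induction hxy with
      | refl => exact ⟨hx, .refl, .refl⟩
      | tail _ hbc ih =>
        obtain ⟨hb, h1, h2⟩ := ih
        have hc := hbc.2 ▸ hb
        exact ⟨hc, h1.tail ⟨hSS _ _ hbc.1 hbc.2, hb⟩,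
          h2.head ⟨hSS _ _ hbc.1.symm hbc.2.symm, hc⟩⟩
    refine IsConnected.biUnion_of_reflTransGen ⟨φ v, hρφ v⟩ (fun x _ => hSc x) ?_
    rintro x rfl y hy
    have hy : ρ y = ρ x := hy
    have h1 := (key _ _ (hρφ _) (hconn x)).2.2
    have h2 := (key _ _ (hρφ _) (hy ▸ hconn y)).2.1
    exact h1.trans h2
  -- distances between the pieces of the new branch sets and paths
  have hBP : ∀ x y v, Δ'.Adj x y → v ≠ x → v ≠ y → ∀ z ∈ B v, ∀ z' ∈ P s(x, y),
      K ≤ dist z z' := fun x y v hxy h1 h2 z hz z' hz' => by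
    rw [dist_comm]; exact hPB x y hxy v h1 h2 z' hz' z hz
  have hCC : ∀ v v', v ≠ v' → ∀ z ∈ C v, ∀ z' ∈ C v', K ≤ dist z z' := by
    intro v v' hvv z hzC z' hzC'
    rcases (hC _ _).1 hzC with ⟨x, rfl, hz⟩ | ⟨x, y, hxy, rfl, hy, hz⟩ <;>
      rcases (hC _ _).1 hzC' with ⟨x', rfl, hz'⟩ | ⟨x', y', hxy', rfl, hy', hz'⟩
    · exact hBB x x' (fun h => hvv (by rw [h])) z hz z' hz'
    · exact hBP x' y' x hxy' (fun h => hvv (by rw [h])) (fun h => hvv (by rw [h, hy'])) z hz z' hz'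
    · exact hPB x y hxy x' (fun h => hvv (by rw [h])) (fun h => hvv (by rw [h, hy])) z hz z' hz'
    · refine hPP _ hxy _ hxy' (fun h => hvv ?_) z hz z' hz'
      rcases Sym2.eq_iff.1 h with ⟨h1, -⟩ | ⟨h1, -⟩
      · rw [h1]
      · rw [h1, hy']
  have hQQ : ∀ e ∈ Δ.edgeSet, ∀ e' ∈ Δ.edgeSet, e ≠ e' → ψ e ≠ ψ e' := by
    intro e he e' he' hne h
    exact hne (by rw [← (hψ e he).2, h, (hψ e' he').2])
  have hdisj : ∀ {A A' : Set X}, (∀ z ∈ A, ∀ z' ∈ A', K ≤ dist z z') → Disjoint A A' := by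
    intro A A' h
    refine Set.disjoint_left.2 fun z hz hz' => ?_
    have := h z hz z hz'
    rw [dist_self] at this
    exact absurd hK (not_lt.2 this)
  -- an edge inside a fibre is never the lift of an edge of `Δ`
  have hne : ∀ x y x' y', ρ x = ρ y → ρ x' ≠ ρ y' → s(x', y') ≠ s(x, y) := by
    intro x y x' y' h h' he
    rcases Sym2.eq_iff.1 he with ⟨rfl, rfl⟩ | ⟨rfl, rfl⟩
    · exact h' h
    · exact h' h.symm
  refine ⟨C, fun e => P (ψ e), hCc, fun v v' hv => hdisj (hCC v v' hv), ?_, ?_, hCC, ?_, ?_⟩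
  · intro u w huw
    obtain ⟨x, y, hxy, rfl, rfl, hs⟩ := hlift u w huw
    obtain ⟨a, ha, b, hb, harc, hab⟩ := hP x y hxy
    refine ⟨a, (hC _ _).2 (Or.inl ⟨x, rfl, ha⟩), b, (hC _ _).2 (Or.inl ⟨y, rfl, hb⟩), ?_, ?_⟩
    · simpa only [hs] using harc
    · simp only [hs]
      refine Subset.antisymm ?_ ?_
      · rintro z ⟨hz, hzC⟩
        obtain ⟨v, hzC⟩ := mem_iUnion.1 hzC
        rcases (hC _ _).1 hzC with ⟨x', -, hz'⟩ | ⟨x', y', hxy', hx', hy', hz'⟩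
        · exact hab.le ⟨hz, mem_iUnion.2 ⟨x', hz'⟩⟩
        · exact absurd hz' (Set.disjoint_left.1 (hPd _ hxy _ hxy'
            (hne x' y' x y (hx'.trans hy'.symm) huw.ne)) hz)
      · refine fun z hz => ⟨(hab.ge hz).1, ?_⟩
        obtain ⟨x', hz'⟩ := mem_iUnion.1 (hab.ge hz).2
        exact mem_iUnion.2 ⟨ρ x', (hC _ _).2 (Or.inl ⟨x', rfl, hz'⟩)⟩
  · exact fun e he e' he' hee => hPd _ (hψ e he).1 _ (hψ e' he').1 (hQQ e he e' he' hee)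
  · exact fun e he e' he' hee => hPP _ (hψ e he).1 _ (hψ e' he').1 (hQQ e he e' he' hee)
  · intro u w huw v hvu hvw z hz z' hzC
    obtain ⟨x, y, hxy, rfl, rfl, hs⟩ := hlift u w huw
    simp only [hs] at hz
    rcases (hC _ _).1 hzC with ⟨x', rfl, hz'⟩ | ⟨x', y', hxy', hx', hy', hz'⟩
    · exact hPB x y hxy x' (fun h => hvu (by rw [h])) (fun h => hvw (by rw [h])) z hz z' hz'
    · exact hPP _ hxy _ hxy' (hne x' y' x y (hx'.trans hy'.symm) huw.ne) z hz _ hz'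

/-- In a subdivision, the interior vertices of each subdivided edge can be contracted into the head
of that edge. -/
lemma SubdivisionData.hasMetricFatMinor {X : Type*} [MetricSpace X] {W' W : Type*}
    {Δ' : SimpleGraph W'} {Δ : SimpleGraph W} (S : SubdivisionData Δ' Δ) {K : ℝ} (hK : 0 < K)
    (h : HasMetricFatMinor Δ' X K) : HasMetricFatMinor Δ X K := by
  have hρ : ∀ x, ∃ v, x = S.φ v ∨ ∃ e i, S.hd e = v ∧ 0 < i ∧ i < S.k e ∧ x = S.vert e i := by
    intro x
    rcases S.cover x with ⟨v, hv⟩ | ⟨e, i, h0, h1, hx⟩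
    · exact ⟨v, Or.inl hv⟩
    · exact ⟨S.hd e, Or.inr ⟨e, i, rfl, h0, h1, hx⟩⟩
  choose ρ hρ using hρ
  have hρφ : ∀ v, ρ (S.φ v) = v := by
    intro v
    rcases hρ (S.φ v) with h | ⟨e, i, -, h0, h1, h⟩
    · exact (S.φ_inj h).symm
    · exact absurd h.symm (S.vert_ne e i v h0 h1)
  have hρv : ∀ e i, 0 < i → i ≤ S.k e → ρ (S.vert e i) = S.hd e := by
    intro e i h0 hi
    rcases hi.eq_or_lt with rfl | hi
    · rw [S.vert_k, hρφ]
    rcases hρ (S.vert e i) with h | ⟨e', j, h, h0', hj, h'⟩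
    · exact absurd h (S.vert_ne e i _ h0 hi)
    · rw [← h, S.vert_disj e e' i j h0 hi h0' hj h']
  refine h.of_contraction hK ρ S.φ hρφ ?_ ?_
  · intro x
    have key : ∀ e n i, i + n = S.k e → 0 < i → Relation.ReflTransGen
        (fun a b => Δ'.Adj a b ∧ ρ a = ρ b) (S.φ (S.hd e)) (S.vert e i) := by
      intro e n
      induction n with
      | zero =>
        rintro i rfl -
        rw [← S.vert_k]
      | succ n ih =>
        intro i hi h0
        refine (ih (i + 1) (by omega) (by omega)).tail ⟨(S.adj e i (by omega)).symm, ?_⟩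
        rw [hρv e _ (by omega) (by omega), hρv e i h0 (by omega)]
    rcases hρ x with h | ⟨e, i, h, h0, hi, rfl⟩
    · rw [← h]
    · rw [← h]
      exact key e (S.k e - i) i (by omega) h0
  · intro u w huw
    let e : Δ.edgeSet := ⟨s(u, w), huw⟩
    have hadj := S.adj e 0 (S.k_pos e)
    have h0 : ρ (S.vert e 0) = S.tl e := by rw [S.vert_zero, hρφ]
    have h1 : ρ (S.vert e (0 + 1)) = S.hd e := hρv e _ (by omega) (S.k_pos e)
    rcases Sym2.eq_iff.1 (S.mk_eq e) with ⟨ht, hh⟩ | ⟨ht, hh⟩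
    · exact ⟨_, _, hadj, h0.trans ht, h1.trans hh⟩
    · exact ⟨_, _, hadj.symm, h1.trans hh, h0.trans ht⟩

end

/-- Let `Δ'` be a subdivision of a finite graph `Δ` and `X` a length space. Then `X` has
`Δ` as an asymptotic minor iff `X` has `Δ'` as an asymptotic minor. -/
theorem asymptoticMinor_iff_of_subdivision
    {X : Type} [MetricSpace X] (hX : IsLengthSpace X)
    {W W' : Type} [Finite W] [Finite W']
    (Δ : SimpleGraph W) (Δ' : SimpleGraph W')
    (hsub : IsSubdivisionOf Δ' Δ) :
    HasAsymptoticMinor Δ X ↔ HasAsymptoticMinor Δ' X := by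
  obtain ⟨S⟩ := hsub.nonempty_data
  refine ⟨fun h K hK => ?_, fun h K hK => S.hasMetricFatMinor hK (h K hK)⟩
  obtain ⟨N, hN⟩ := (Set.finite_range S.k).bddAbove
  have h1 : (1 : ℝ) ≤ 2 * N + 1 := by linarith [Nat.cast_nonneg (α := ℝ) N]
  have hKR : K ≤ (K + 1) * (2 * N + 1) := by nlinarith
  obtain ⟨F⟩ := exists_fatSkeleton hX S.tl S.hd S.mk_eq hK hKR (h _ (by linarith))
  refine F.hasMetricFatMinor S hK fun e => mul_le_mul_of_nonneg_left ?_ (by linarith)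
  have h2 : S.k e ≤ N := hN (Set.mem_range_self e)
  exact_mod_cast (by omega : 2 * S.k e - 1 ≤ 2 * N + 1)
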